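/- arXiv:0806.3572 — 2 statements merged into one kernel-verified Lean document; each statement's English description precedes it below -/
import Mathlib

section
/- Let M be a proper geodesic metric space, let c : [0,∞) → M be a ray, and let p ∈ M. Then there exists a coray c̃ to c with c̃(0) = p. That is, there exist a ray c̃ starting at p, minimal geodesics c_n : [0, L_n] → M with L_n → ∞ and c_n(L_n) in the image of c, such that c_n converges to c̃ uniformly on compact subsets of [0,∞). -/
/-- A ray in a metric space `M` is a map `c : [0,∞) → M` (here a map `ℝ → M`
restricted to nonnegative times) with `dist (c s) (c t) = |s - t|` for all
`s, t ≥ 0`. -/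
def IsRay {M : Type*} [MetricSpace M] (c : ℝ → M) : Prop :=
  ∀ s t : ℝ, 0 ≤ s → 0 ≤ t → dist (c s) (c t) = |s - t|

/-- `c` is a minimal geodesic on the set `I ⊆ ℝ`:
`dist (c s) (c t) = |s - t|` for all `s, t ∈ I`. -/
def IsMinGeodesicOn {M : Type*} [MetricSpace M] (c : ℝ → M) (I : Set ℝ) : Prop :=
  ∀ s ∈ I, ∀ t ∈ I, dist (c s) (c t) = |s - t|

/-- A metric space is geodesic if every pair of points `x, y` is joined by a
minimal geodesic `c : [0, dist x y] → M` with `c 0 = x` and `c (dist x y) = y`. -/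
def IsGeodesicSpace (M : Type*) [MetricSpace M] : Prop :=
  ∀ x y : M, ∃ c : ℝ → M, c 0 = x ∧ c (dist x y) = y ∧
    IsMinGeodesicOn c (Set.Icc 0 (dist x y))

/-- The maps `cs n : [0, L n] → M` converge to `c' : [0,∞) → M` uniformly on
compact subsets of `[0,∞)`: for every `T > 0`,
`sup_{t ∈ [0, min T (L n)]} dist (cs n t) (c' t) → 0`. -/
def ConvUnifOnCompacts {M : Type*} [MetricSpace M] (L : ℕ → ℝ)
    (cs : ℕ → ℝ → M) (c' : ℝ → M) : Prop :=
  ∀ T > (0 : ℝ), ∀ ε > (0 : ℝ), ∀ᶠ n in Filter.atTop,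
    ∀ t ∈ Set.Icc (0 : ℝ) (min T (L n)), dist (cs n t) (c' t) < ε

/-!
Join `p` to points of the ray at distances tending to infinity by minimal geodesics, and extend
each of them by a constant beyond its endpoint. The extensions are `1`-Lipschitz maps `ℝ → M` with
the same value at `0`, so by Arzelà–Ascoli a subsequence converges uniformly on compact sets.
A fixed pair of times eventually lies in the domains of the geodesics, where
`dist (γₙ s) (γₙ t) = |s - t|` passes to the limit.
-/

open Bornology Filter Metric Set Topology
open scoped NNReal

section Lipschitz

variable {X Y : Type*} [PseudoMetricSpace X] [PseudoMetricSpace Y] {K : ℝ≥0}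

theorem lipschitzWith_IccExtend_domRestrict {a b : ℝ} (h : a ≤ b) {f : ℝ → Y}
    (hf : LipschitzOnWith K f (Icc a b)) :
    LipschitzWith K (IccExtend h ((Icc a b).domRestrict f)) := by
  simpa only [mul_one, IccExtend] using hf.to_restrict.comp (LipschitzWith.projIcc h)

theorem isCompact_setOf_lipschitzWith_mem [ProperSpace Y] (K : ℝ≥0) (x₀ : X) {S : Set Y}
    (hS : IsClosed S) (hb : IsBounded S) :
    IsCompact {f : C(X, Y) | LipschitzWith K f ∧ f x₀ ∈ S} := by
  apply ArzelaAscoli.isCompact_of_equicontinuous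
  · have image_eq : ContinuousMap.toFun '' {f : C(X, Y) | LipschitzWith K f ∧ f x₀ ∈ S} =
        {f : X → Y | LipschitzWith K f} ∩ {f | f x₀ ∈ S} := by
      ext f
      constructor
      · rintro ⟨g, hg, rfl⟩
        exact hg
      · intro hf
        exact ⟨⟨f, hf.1.continuous⟩, hf, rfl⟩
    rw [image_eq]
    rcases S.eq_empty_or_nonempty with rfl | ⟨y₀, -⟩
    · simp
    obtain ⟨r, hr⟩ := hb.subset_closedBall y₀
    have hball := isCompact_univ_pi fun x => isCompact_closedBall y₀ (K * dist x x₀ + r)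
    refine hball.of_isClosed_subset
      ((isClosed_setOfPred_lipschitzWith K).inter (hS.preimage (continuous_apply x₀))) ?_
    rintro f ⟨hf, hfS⟩ x -
    calc dist (f x) y₀ ≤ dist (f x) (f x₀) + dist (f x₀) y₀ := dist_triangle _ _ _
      _ ≤ K * dist x x₀ + r := add_le_add (hf.dist_le_mul x x₀) (hr hfS)
  · exact (LipschitzWith.uniformEquicontinuous _ K fun f => f.2.1).equicontinuous

theorem exists_subseq_tendsto_of_lipschitzWith [ProperSpace X] [ProperSpace Y] {f : ℕ → C(X, Y)}
    (hf : ∀ n, LipschitzWith K (f n)) {x₀ : X} (hb : IsBounded (range fun n => f n x₀)) :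
    ∃ (g : C(X, Y)) (φ : ℕ → ℕ), StrictMono φ ∧ Tendsto (f ∘ φ) atTop (𝓝 g) := by
  have hK := isCompact_setOf_lipschitzWith_mem K x₀ isClosed_closure hb.closure
  obtain ⟨g, -, φ, hφ, hg⟩ :=
    hK.tendsto_subseq fun n => ⟨hf n, subset_closure (mem_range_self n)⟩
  exact ⟨g, φ, hφ, hg⟩

end Lipschitz

section Geodesic

variable {M : Type*} [MetricSpace M]

theorem isRay_iff_isMinGeodesicOn_Ici {c : ℝ → M} : IsRay c ↔ IsMinGeodesicOn c (Ici 0) :=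
  ⟨fun h s hs t ht => h s t hs ht, fun h s t hs ht => h s hs t ht⟩

theorem IsRay.not_isBounded_image {c : ℝ → M} (hc : IsRay c) : ¬IsBounded (c '' Ici 0) := by
  intro hb
  obtain ⟨r, hr⟩ := hb.subset_closedBall (c 0)
  have hs : 0 ≤ |r| + 1 := by positivity
  have hdist : dist (c (|r| + 1)) (c 0) ≤ r := hr (mem_image_of_mem c hs)
  rw [hc _ _ hs le_rfl, sub_zero, abs_of_nonneg hs] at hdist
  linarith [le_abs_self r]

theorem IsMinGeodesicOn.lipschitzOnWith {c : ℝ → M} {I : Set ℝ} (hc : IsMinGeodesicOn c I) :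
    LipschitzOnWith 1 c I :=
  LipschitzOnWith.of_dist_le_mul fun s hs t ht => by
    rw [hc s hs t ht, Real.dist_eq, NNReal.coe_one, one_mul]

theorem isMinGeodesicOn_of_tendsto {ι : Type*} {l : Filter ι} [l.NeBot] {γ : ι → ℝ → M}
    {I : ι → Set ℝ} {c : ℝ → M} {J : Set ℝ} (hγ : ∀ᶠ i in l, IsMinGeodesicOn (γ i) (I i))
    (hJ : ∀ t ∈ J, ∀ᶠ i in l, t ∈ I i) (hlim : ∀ t ∈ J, Tendsto (γ · t) l (𝓝 (c t))) :
    IsMinGeodesicOn c J := by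
  intro s hs t ht
  refine tendsto_nhds_unique ((hlim s hs).dist (hlim t ht)) (tendsto_const_nhds.congr' ?_)
  filter_upwards [hγ, hJ s hs, hJ t ht] with i hi hsi hti
  exact (hi s hsi t hti).symm

theorem IsGeodesicSpace.exists_isMinGeodesicOn_mem (hgeo : IsGeodesicSpace M) {S : Set M}
    (hS : ¬IsBounded S) (p : M) (r : ℝ) :
    ∃ (L : ℝ) (γ : ℝ → M), r < L ∧ IsMinGeodesicOn γ (Icc 0 L) ∧ γ 0 = p ∧ γ L ∈ S := by
  obtain ⟨q, hq, hqr⟩ : ∃ q ∈ S, q ∉ closedBall p r :=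
    not_subset.1 fun h => hS (isBounded_closedBall.subset h)
  obtain ⟨γ, hγ0, hγL, hγ⟩ := hgeo p q
  refine ⟨dist p q, γ, ?_, hγ, hγ0, hγL.symm ▸ hq⟩
  rwa [mem_closedBall', not_le] at hqr

variable {L : ℕ → ℝ} {γ : ℕ → ℝ → M} {c : ℝ → M}

theorem ConvUnifOnCompacts.tendsto_apply (h : ConvUnifOnCompacts L γ c)
    (hL : Tendsto L atTop atTop) {t : ℝ} (ht : 0 ≤ t) :
    Tendsto (γ · t) atTop (𝓝 (c t)) := by
  refine Metric.tendsto_nhds.2 fun ε hε => ?_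
  filter_upwards [h (t + 1) (by positivity) ε hε, hL.eventually_ge_atTop t] with n hn htn
  exact hn t ⟨ht, le_min (by linarith) htn⟩

theorem ConvUnifOnCompacts.isRay (h : ConvUnifOnCompacts L γ c) (hL : Tendsto L atTop atTop)
    (hγ : ∀ n, IsMinGeodesicOn (γ n) (Icc 0 (L n))) : IsRay c :=
  isRay_iff_isMinGeodesicOn_Ici.2 <| isMinGeodesicOn_of_tendsto (.of_forall hγ)
    (fun t ht => (hL.eventually_ge_atTop t).mono fun _ htn => ⟨ht, htn⟩)
    fun _ ht => h.tendsto_apply hL ht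

theorem convUnifOnCompacts_of_tendsto {f : ℕ → C(ℝ, M)} {g : C(ℝ, M)}
    (hfg : Tendsto f atTop (𝓝 g)) (heq : ∀ n, EqOn (f n) (γ n) (Icc 0 (L n))) :
    ConvUnifOnCompacts L γ g := by
  intro T _ ε hε
  have hunif : TendstoUniformlyOn (fun n => f n) g atTop (Icc 0 T) :=
    ContinuousMap.tendsto_iff_forall_isCompact_tendstoUniformlyOn.1 hfg _ isCompact_Icc
  filter_upwards [Metric.tendstoUniformlyOn_iff.1 hunif ε hε] with n hn t ht
  rw [← heq n ⟨ht.1, ht.2.trans (min_le_right _ _)⟩, dist_comm]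
  exact hn t ⟨ht.1, ht.2.trans (min_le_left _ _)⟩

theorem exists_subseq_convUnifOnCompacts [ProperSpace M] (hL : ∀ n, 0 ≤ L n)
    (hγ : ∀ n, IsMinGeodesicOn (γ n) (Icc 0 (L n))) (hb : IsBounded (range fun n => γ n 0)) :
    ∃ (c : ℝ → M) (φ : ℕ → ℕ), StrictMono φ ∧ ConvUnifOnCompacts (L ∘ φ) (γ ∘ φ) c := by
  have hlip n := lipschitzWith_IccExtend_domRestrict (hL n) (hγ n).lipschitzOnWith
  let f (n : ℕ) : C(ℝ, M) := ⟨_, (hlip n).continuous⟩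
  have hfγ (n : ℕ) : EqOn (f n) (γ n) (Icc 0 (L n)) := fun t ht =>
    IccExtend_of_mem (hL n) ((Icc 0 (L n)).domRestrict (γ n)) ht
  have hf0 : (fun n => f n 0) = fun n => γ n 0 :=
    funext fun n => hfγ n (left_mem_Icc.2 (hL n))
  obtain ⟨g, φ, hφ, hg⟩ := exists_subseq_tendsto_of_lipschitzWith (f := f) hlip (hf0 ▸ hb)
  exact ⟨g, φ, hφ, convUnifOnCompacts_of_tendsto hg fun n => hfγ (φ n)⟩

theorem exists_coray_general [ProperSpace M] (hgeo : IsGeodesicSpace M) {S : Set M}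
    (hS : ¬IsBounded S) (p : M) :
    ∃ c' : ℝ → M, IsRay c' ∧ c' 0 = p ∧
      ∃ (L : ℕ → ℝ) (cs : ℕ → ℝ → M),
        (∀ n, 0 < L n) ∧
        Tendsto L atTop atTop ∧
        (∀ n, IsMinGeodesicOn (cs n) (Icc 0 (L n))) ∧
        (∀ n, cs n (L n) ∈ S) ∧
        ConvUnifOnCompacts L cs c' := by
  choose L γ hnL hγ hγ0 hγS using fun n : ℕ => hgeo.exists_isMinGeodesicOn_mem hS p n
  have hLpos (n : ℕ) : 0 < L n := n.cast_nonneg.trans_lt (hnL n)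
  have hLtop : Tendsto L atTop atTop :=
    tendsto_atTop_mono (fun n => (hnL n).le) tendsto_natCast_atTop_atTop
  have hb : IsBounded (range fun n => γ n 0) := by
    simp only [hγ0, range_const, isBounded_singleton]
  obtain ⟨c', φ, hφ, hconv⟩ := exists_subseq_convUnifOnCompacts (fun n => (hLpos n).le) hγ hb
  have hLφ : Tendsto (L ∘ φ) atTop atTop := hLtop.comp hφ.tendsto_atTop
  have hc'0 : c' 0 = p := tendsto_nhds_unique (hconv.tendsto_apply hLφ le_rfl) <| by
    simp only [Function.comp_apply, hγ0, tendsto_const_nhds]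
  exact ⟨c', hconv.isRay hLφ fun n => hγ (φ n), hc'0, L ∘ φ, γ ∘ φ, fun n => hLpos (φ n), hLφ,
    fun n => hγ (φ n), fun n => hγS (φ n), hconv⟩

end Geodesic

/-- In a proper geodesic metric space, for every ray `c` and every point `p`
there is a coray `c'` to `c` starting at `p`: a ray `c'` with `c' 0 = p`
obtained as the locally uniform limit of minimal geodesics `cs n : [0, L n] → M`
with `L n → ∞` and endpoints `cs n (L n)` on the image of `c`. -/
theorem exists_coray {M : Type*} [MetricSpace M] [ProperSpace M]
    (hgeo : IsGeodesicSpace M) (c : ℝ → M) (hc : IsRay c) (p : M) :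
    ∃ c' : ℝ → M, IsRay c' ∧ c' 0 = p ∧
      ∃ (L : ℕ → ℝ) (cs : ℕ → ℝ → M),
        (∀ n, 0 < L n) ∧
        Filter.Tendsto L Filter.atTop Filter.atTop ∧
        (∀ n, IsMinGeodesicOn (cs n) (Set.Icc 0 (L n))) ∧
        (∀ n, cs n (L n) ∈ c '' Set.Ici (0 : ℝ)) ∧
        ConvUnifOnCompacts L cs c' := by
  exact exists_coray_general hgeo hc.not_isBounded_image p
end

section
/- Let n ≥ 1 and consider the flat torus T = ℝⁿ/ℤⁿ with quotient map π : ℝⁿ → T. Fix x̃, ỹ ∈ ℝⁿ with π(x̃) ≠ π(ỹ), and set x = π(x̃), y = π(ỹ). The geodesics from x to y are the paths γ_k : [0,1] → T, γ_k(t) = π(x̃ + t·(ỹ + k − x̃)) for k ∈ ℤⁿ. Then the set B = { π((x̃ + ỹ + k)/2) : k ∈ ℤⁿ } of midpoints has at most 2ⁿ elements, is disjoint from {x, y}, and every geodesic γ_k passes through a point of B (namely γ_k(1/2) ∈ B). Hence B is a finite blocking set for x and y, so the pair x, y is secure in the flat torus. -/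
/-- The integer lattice `ℤⁿ` as an additive subgroup of `ℝⁿ = Fin n → ℝ`. -/
def intLattice (n : ℕ) : AddSubgroup (Fin n → ℝ) where
  carrier := {v | ∀ i, ∃ m : ℤ, v i = (m : ℝ)}
  zero_mem' := fun i => ⟨0, by simp⟩
  add_mem' := by
    intro a b ha hb i
    obtain ⟨ma, hma⟩ := ha i
    obtain ⟨mb, hmb⟩ := hb i
    exact ⟨ma + mb, by simp [hma, hmb]⟩
  neg_mem' := by
    intro a ha i
    obtain ⟨m, hm⟩ := ha i
    exact ⟨-m, by simp [hm]⟩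

/-- The flat torus `ℝⁿ/ℤⁿ`. -/
abbrev FlatTorus (n : ℕ) := (Fin n → ℝ) ⧸ intLattice n

/-- The quotient map `π : ℝⁿ → ℝⁿ/ℤⁿ`. -/
abbrev torusProj (n : ℕ) : (Fin n → ℝ) →+ FlatTorus n :=
  QuotientAddGroup.mk' (intLattice n)

/-- For lifts `x̃, ỹ ∈ ℝⁿ` and `k ∈ ℤⁿ`, the geodesic
`γ_k(t) = π (x̃ + t (ỹ + k - x̃))` from `π x̃` to `π ỹ` in the flat torus. -/
def torusGeodesic (n : ℕ) (xl yl : Fin n → ℝ) (k : Fin n → ℤ) (t : ℝ) :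
    FlatTorus n :=
  torusProj n (xl + t • (yl + (fun i => (k i : ℝ)) - xl))

/-- The set of midpoints `π ((x̃ + ỹ + k)/2)`, `k ∈ ℤⁿ`. -/
def midpointSet (n : ℕ) (xl yl : Fin n → ℝ) : Set (FlatTorus n) :=
  {b | ∃ k : Fin n → ℤ, b = torusProj n ((2 : ℝ)⁻¹ • (xl + yl + fun i => (k i : ℝ)))}

/-!
Modulo `ℤⁿ`, the midpoint `(x̃ + ỹ + k)/2` depends only on the parities of the coordinates of `k`,
so there are at most `2ⁿ` midpoints. Every midpoint `b` satisfies `2b = x + y` in the torus, so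
`b = x` or `b = y` would force `x = y`.
-/

theorem encard_range_le_of_factorsThrough {α β γ : Type*} {f : α → γ} {g : α → β}
    (h : f.FactorsThrough g) : (Set.range f).encard ≤ ENat.card β := by
  rcases isEmpty_or_nonempty γ with _ | _
  · simp [Set.eq_empty_of_isEmpty]
  obtain ⟨e, rfl⟩ := (Function.factorsThrough_iff f).1 h
  calc (Set.range (e ∘ g)).encard
      ≤ (Set.range e).encard := Set.encard_le_encard (Set.range_comp_subset_range g e)
    _ ≤ ENat.card β := by
      rw [← Set.image_univ, ← Set.encard_univ]
      exact Set.encard_image_le e Set.univ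

section

variable {n : ℕ} (xl yl : Fin n → ℝ)

theorem torusProj_intCast (k : Fin n → ℤ) : torusProj n (fun i => (k i : ℝ)) = 0 :=
  (QuotientAddGroup.eq_zero_iff _).2 fun i => ⟨k i, rfl⟩

theorem torusGeodesic_add_zsmul_inv_natCast {m : ℕ} (hm : m ≠ 0) (k j : Fin n → ℤ) :
    torusGeodesic n xl yl (k + (m : ℤ) • j) (m : ℝ)⁻¹ = torusGeodesic n xl yl k (m : ℝ)⁻¹ := by
  have hlift : xl + (m : ℝ)⁻¹ • (yl + (fun i => (((k + (m : ℤ) • j) i : ℤ) : ℝ)) - xl) =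
      xl + (m : ℝ)⁻¹ • (yl + (fun i => (k i : ℝ)) - xl) + fun i => (j i : ℝ) := by
    ext i
    simp only [Pi.add_apply, Pi.sub_apply, Pi.smul_apply, smul_eq_mul, Int.cast_add,
      Int.cast_mul, Int.cast_natCast]
    field_simp
    ring
  rw [torusGeodesic, hlift, map_add, torusProj_intCast, add_zero, torusGeodesic]

theorem torusGeodesic_inv_natCast_factorsThrough {m : ℕ} (hm : m ≠ 0) :
    Function.FactorsThrough (fun k => torusGeodesic n xl yl k (m : ℝ)⁻¹)
      (fun (k : Fin n → ℤ) i => (k i : ZMod m)) := by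
  intro k l hkl
  have hdvd : ∀ i, (m : ℤ) ∣ l i - k i := fun i =>
    (ZMod.intCast_eq_intCast_iff_dvd_sub _ _ _).1 (congrFun hkl i)
  choose j hj using hdvd
  obtain rfl : l = k + (m : ℤ) • j := by
    ext i
    simp [← hj]
  exact (torusGeodesic_add_zsmul_inv_natCast xl yl hm k j).symm

theorem encard_range_torusGeodesic_inv_natCast_le {m : ℕ} (hm : m ≠ 0) :
    (Set.range fun k => torusGeodesic n xl yl k (m : ℝ)⁻¹).encard ≤ (m ^ n : ℕ) := by
  have : NeZero m := ⟨hm⟩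
  simpa [ENat.card_eq_coe_fintype_card, ZMod.card] using
    encard_range_le_of_factorsThrough (torusGeodesic_inv_natCast_factorsThrough xl yl hm)

theorem midpointSet_eq_range_torusGeodesic :
    midpointSet n xl yl = Set.range fun k => torusGeodesic n xl yl k 2⁻¹ := by
  have hmid (k : Fin n → ℤ) : torusGeodesic n xl yl k 2⁻¹ =
      torusProj n ((2 : ℝ)⁻¹ • (xl + yl + fun i => (k i : ℝ))) :=
    congrArg (torusProj n) (by module)
  ext b
  simp only [midpointSet, Set.mem_ofPred_eq, Set.mem_range, hmid, eq_comm]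

theorem two_nsmul_torusGeodesic_inv_two (k : Fin n → ℤ) :
    2 • torusGeodesic n xl yl k 2⁻¹ = torusProj n xl + torusProj n yl :=
  calc 2 • torusGeodesic n xl yl k 2⁻¹
      = torusProj n (xl + yl + fun i => (k i : ℝ)) := by
        rw [torusGeodesic, ← map_nsmul]
        congr 1
        module
    _ = torusProj n xl + torusProj n yl := by
        rw [map_add, map_add, torusProj_intCast, add_zero]

variable {xl yl}

theorem two_nsmul_of_mem_midpointSet {b : FlatTorus n} (hb : b ∈ midpointSet n xl yl) :
    2 • b = torusProj n xl + torusProj n yl := by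
  rw [midpointSet_eq_range_torusGeodesic] at hb
  obtain ⟨k, rfl⟩ := hb
  exact two_nsmul_torusGeodesic_inv_two xl yl k

end

/-- In the flat torus `T = ℝⁿ/ℤⁿ`, given lifts `x̃, ỹ` of two distinct points
`x = π x̃` and `y = π ỹ`, the set `B` of midpoints `π ((x̃ + ỹ + k)/2)`,
`k ∈ ℤⁿ`, has at most `2ⁿ` elements, avoids `x` and `y`, and every geodesic
`γ_k(t) = π (x̃ + t (ỹ + k - x̃))` from `x` to `y` passes through a point of
`B` (namely `γ_k(1/2) ∈ B`). Hence `B` is a finite blocking set for `x, y`,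
so the pair `x, y` is secure in the flat torus. -/
theorem flat_torus_pair_secure (n : ℕ) (hn : 1 ≤ n) (xl yl : Fin n → ℝ)
    (hxy : torusProj n xl ≠ torusProj n yl) :
    (midpointSet n xl yl).Finite ∧
    Nat.card (midpointSet n xl yl) ≤ 2 ^ n ∧
    torusProj n xl ∉ midpointSet n xl yl ∧
    torusProj n yl ∉ midpointSet n xl yl ∧
    (∀ k : Fin n → ℤ, torusGeodesic n xl yl k (2 : ℝ)⁻¹ ∈ midpointSet n xl yl) := by
  have hcard : (midpointSet n xl yl).encard ≤ (2 ^ n : ℕ) := by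
    rw [midpointSet_eq_range_torusGeodesic]
    exact_mod_cast encard_range_torusGeodesic_inv_natCast_le xl yl two_ne_zero
  obtain ⟨hfinite, hncard⟩ := Set.encard_le_coe_iff_finite_ncard_le.1 hcard
  refine ⟨hfinite, hncard, fun hx => hxy ?_, fun hy => hxy ?_, fun k => ?_⟩
  · have hdouble := two_nsmul_of_mem_midpointSet hx
    rwa [two_nsmul, add_right_inj] at hdouble
  · have hdouble := two_nsmul_of_mem_midpointSet hy
    rw [two_nsmul, add_left_inj] at hdouble
    exact hdouble.symm
  · rw [midpointSet_eq_range_torusGeodesic]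
    exact Set.mem_range_self k
end
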